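/- arXiv:2605.26610 — 3 statements merged into one kernel-verified Lean document; each statement's English description precedes it below -/
import Mathlib

section
/- Let F > 0. Define the standard normal pdf φ(x) = exp(−x²/2)/√(2π) and cdf N(x) = ∫_{−∞}^x φ(u) du. For k ∈ ℝ and w > 0 set d₊(k,w) = −k/√w + √w/2, d₋(k,w) = −k/√w − √w/2, and C_BS(k,w) = F·(N(d₊(k,w)) − exp(k)·N(d₋(k,w))). Let w : ℝ → ℝ be twice differentiable with w(k) > 0 for all k, define the slice C(k) := C_BS(k, w(k)) and the Durrleman function g(k) := (1 − k·w′(k)/(2·w(k)))² − (w′(k)²/4)·(1/w(k) + 1/4) + w″(k)/2. Then C is twice differentiable and C″(k) − C′(k) = (F·φ(d₊(k,w(k)))/√(w(k)))·g(k) for every k ∈ ℝ. -/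
open MeasureTheory

/-- Standard normal pdf. -/
noncomputable def gauss (x : ℝ) : ℝ := Real.exp (-x ^ 2 / 2) / Real.sqrt (2 * Real.pi)

/-- Standard normal cdf. -/
noncomputable def normCdf (x : ℝ) : ℝ := ∫ u in Set.Iic x, gauss u

/-- Black–Scholes `d₊` in log-moneyness `k` and total variance `w`. -/
noncomputable def dplus (k w : ℝ) : ℝ := -k / Real.sqrt w + Real.sqrt w / 2

/-- Black–Scholes `d₋` in log-moneyness `k` and total variance `w`. -/
noncomputable def dminus (k w : ℝ) : ℝ := -k / Real.sqrt w - Real.sqrt w / 2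

/-- Undiscounted forward Black–Scholes call price. -/
noncomputable def CBS (F k w : ℝ) : ℝ :=
  F * (normCdf (dplus k w) - Real.exp k * normCdf (dminus k w))

/-!
Work with the total volatility `σ = √w` along the slice, and write `d₊′`, `d₋′` for the total
derivatives of `k ↦ d±(k, w(k))`. Since `eᵏ φ(d₋) = φ(d₊)` and `d₊ - d₋ = σ`, the chain rule
collapses to `C′ = F (φ(d₊) σ′ - eᵏ N(d₋))`. Differentiating once more,
`C″ - C′ = F φ(d₊) (σ″ - d₊ d₊′ σ′ - d₊′)`, and `σ d₋′ = -(1 + d₊ σ′)` turns the bracket into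
`σ″ + σ d₊′ d₋′`. This is `g / σ`, because `-σ d₊′` and `-σ d₋′` are
`(1 - k w′ / (2 w)) ∓ w′ / 4`, whose product is a difference of squares.
-/

theorem hasDerivAt_integral_Iic {E : Type*} [NormedAddCommGroup E] [NormedSpace ℝ E]
    [CompleteSpace E] {f : ℝ → E} {x b : ℝ} (hf : IntegrableOn f (Set.Iic b)) (hxb : x < b)
    (hfx : ContinuousAt f x) : HasDerivAt (fun y => ∫ u in Set.Iic y, f u) (f x) x := by
  have hmeas : StronglyMeasurableAtFilter f (nhds x) :=
    ⟨Set.Iic b, Iic_mem_nhds hxb, hf.aestronglyMeasurable⟩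
  have hsplit : (fun y => ∫ u in Set.Iic y, f u) =ᶠ[nhds x]
      fun y => (∫ u in x..y, f u) + ∫ u in Set.Iic x, f u := by
    filter_upwards [Iic_mem_nhds hxb] with y hyb
    rw [← intervalIntegral.integral_Iic_sub_Iic (hf.mono_set (Set.Iic_subset_Iic.2 hxb.le))
      (hf.mono_set (Set.Iic_subset_Iic.2 hyb)), sub_add_cancel]
  exact ((intervalIntegral.integral_hasDerivAt_right IntervalIntegrable.refl hmeas hfx).add_const
    _).congr_of_eventuallyEq hsplit

theorem gauss_eq_gaussianPDFReal : gauss = ProbabilityTheory.gaussianPDFReal 0 1 := by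
  ext x
  simp [gauss, ProbabilityTheory.gaussianPDFReal, div_eq_inv_mul]

theorem integrable_gauss : Integrable gauss :=
  gauss_eq_gaussianPDFReal ▸ ProbabilityTheory.integrable_gaussianPDFReal 0 1

theorem hasDerivAt_gauss (x : ℝ) : HasDerivAt gauss (-x * gauss x) x := by
  have hexponent : HasDerivAt (fun y : ℝ => -y ^ 2 / 2) (-x) x :=
    ((hasDerivAt_pow 2 x).fun_neg.div_const 2).congr_deriv (by ring)
  exact (hexponent.exp.div_const _).congr_deriv (by rw [gauss]; ring)

theorem hasDerivAt_normCdf (x : ℝ) : HasDerivAt normCdf (gauss x) x :=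
  hasDerivAt_integral_Iic integrable_gauss.integrableOn (lt_add_one x)
    (hasDerivAt_gauss x).continuousAt

theorem dminus_eq_dplus_sub_sqrt (k w : ℝ) : dminus k w = dplus k w - √w := by
  rw [dminus, dplus]
  ring

theorem dminus_sq {w : ℝ} (k : ℝ) (hw : 0 < w) : dminus k w ^ 2 = dplus k w ^ 2 + 2 * k := by
  have hσ : √w ≠ 0 := (Real.sqrt_pos.2 hw).ne'
  rw [dminus, dplus]
  field

theorem exp_mul_gauss_dminus {w : ℝ} (k : ℝ) (hw : 0 < w) :
    Real.exp k * gauss (dminus k w) = gauss (dplus k w) := by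
  rw [gauss, gauss, ← mul_div_assoc, ← Real.exp_add, dminus_sq k hw]
  ring_nf

/-- The total derivative `d₊′` of `k ↦ d₊(k, w(k))`, where `w = w(k)` and `σ'` is the derivative
of the total volatility `√w` along the slice. -/
noncomputable def dplusSlope (k w σ' : ℝ) : ℝ := -(1 - k * σ' / √w) / √w + σ' / 2

/-- The total derivative `d₋′` of `k ↦ d₋(k, w(k))`, where `w = w(k)` and `σ'` is the derivative
of the total volatility `√w` along the slice. -/
noncomputable def dminusSlope (k w σ' : ℝ) : ℝ := dplusSlope k w σ' - σ'

/-- The derivative `C′` of the slice `C(k) = C_BS(k, w(k))`, where `w = w(k)` and `σ'` is the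
derivative of the total volatility `√w` along the slice. -/
noncomputable def CBSSlope (F k w σ' : ℝ) : ℝ :=
  F * (gauss (dplus k w) * σ' - Real.exp k * normCdf (dminus k w))

/-- Durrleman's function `g` as a function of the log-moneyness `k` and of the values `w`, `w'`,
`w''` at `k` of the total variance and its first two derivatives. -/
noncomputable def durrleman (k w w' w'' : ℝ) : ℝ :=
  (1 - k * w' / (2 * w)) ^ 2 - w' ^ 2 / 4 * (1 / w + 1 / 4) + w'' / 2

theorem sqrt_mul_dminusSlope {w : ℝ} (k σ' : ℝ) (hw : 0 < w) :
    √w * dminusSlope k w σ' = -(1 + dplus k w * σ') := by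
  have hσ : √w ≠ 0 := (Real.sqrt_pos.2 hw).ne'
  rw [dminusSlope, dplusSlope, dplus]
  field

theorem sqrt_mul_dplusSlope_div_two_mul_sqrt {w : ℝ} (k w' : ℝ) (hw : 0 < w) :
    √w * dplusSlope k w (w' / (2 * √w)) = -(1 - k * w' / (2 * w) - w' / 4) := by
  have hσ : √w ≠ 0 := (Real.sqrt_pos.2 hw).ne'
  have hk : k * (w' / (2 * √w)) / √w = k * w' / (2 * w) := by
    rw [mul_div_assoc', div_div, mul_assoc, Real.mul_self_sqrt hw.le]
  rw [dplusSlope, hk]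
  field

theorem sqrt_mul_dminusSlope_div_two_mul_sqrt {w : ℝ} (k w' : ℝ) (hw : 0 < w) :
    √w * dminusSlope k w (w' / (2 * √w)) = -(1 - k * w' / (2 * w) + w' / 4) := by
  have hσ : √w ≠ 0 := (Real.sqrt_pos.2 hw).ne'
  rw [dminusSlope, mul_sub, sqrt_mul_dplusSlope_div_two_mul_sqrt k w' hw]
  field

theorem durrleman_eq_sqrt_mul {w : ℝ} (k w' w'' : ℝ) (hw : 0 < w) :
    durrleman k w w' w'' =
      √w * ((w'' / 2 - (w' / (2 * √w)) ^ 2) / √w +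
        √w * dplusSlope k w (w' / (2 * √w)) * dminusSlope k w (w' / (2 * √w))) := by
  have hσ : √w ≠ 0 := (Real.sqrt_pos.2 hw).ne'
  have hsq : (w' / (2 * √w)) ^ 2 = w' ^ 2 / (4 * w) := by
    rw [div_pow, mul_pow, Real.sq_sqrt hw.le]
    norm_num
  rw [mul_add, mul_div_cancel₀ _ hσ, hsq, mul_left_comm,
    sqrt_mul_dplusSlope_div_two_mul_sqrt k w' hw, sqrt_mul_dminusSlope_div_two_mul_sqrt k w' hw,
    durrleman]
  ring

section Slice

variable {w : ℝ → ℝ} {k : ℝ}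

theorem hasDerivAt_dplus_slice {σ' : ℝ} (hσ : HasDerivAt (fun x => √(w x)) σ' k)
    (hw : 0 < w k) :
    HasDerivAt (fun x => dplus x (w x)) (dplusSlope k (w k) σ') k := by
  have hσ0 : √(w k) ≠ 0 := (Real.sqrt_pos.2 hw).ne'
  refine (((hasDerivAt_neg k).fun_div hσ hσ0).fun_add (hσ.div_const 2)).congr_deriv ?_
  rw [dplusSlope]
  field

theorem hasDerivAt_dminus_slice {σ' : ℝ} (hσ : HasDerivAt (fun x => √(w x)) σ' k)
    (hw : 0 < w k) :
    HasDerivAt (fun x => dminus x (w x)) (dminusSlope k (w k) σ') k := by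
  simp only [dminus_eq_dplus_sub_sqrt]
  exact (hasDerivAt_dplus_slice hσ hw).fun_sub hσ

theorem hasDerivAt_exp_mul_normCdf_dminus_slice {σ' : ℝ}
    (hσ : HasDerivAt (fun x => √(w x)) σ' k) (hw : 0 < w k) :
    HasDerivAt (fun x => Real.exp x * normCdf (dminus x (w x)))
      (Real.exp k * normCdf (dminus k (w k)) + gauss (dplus k (w k)) * dminusSlope k (w k) σ')
      k := by
  have hN := (hasDerivAt_normCdf _).comp k (hasDerivAt_dminus_slice hσ hw)
  refine ((Real.hasDerivAt_exp k).fun_mul hN).congr_deriv ?_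
  rw [← exp_mul_gauss_dminus k hw, Function.comp_apply, mul_assoc]

theorem hasDerivAt_CBS_slice {σ' : ℝ} (F : ℝ) (hσ : HasDerivAt (fun x => √(w x)) σ' k)
    (hw : 0 < w k) :
    HasDerivAt (fun x => CBS F x (w x)) (CBSSlope F k (w k) σ') k := by
  have hN := (hasDerivAt_normCdf _).comp k (hasDerivAt_dplus_slice hσ hw)
  refine ((hN.fun_sub (hasDerivAt_exp_mul_normCdf_dminus_slice hσ hw)).const_mul F).congr_deriv ?_
  rw [CBSSlope, dminusSlope]
  ring

theorem hasDerivAt_CBSSlope_slice {σ' : ℝ → ℝ} {σ'' : ℝ} (F : ℝ)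
    (hσ : HasDerivAt (fun x => √(w x)) (σ' k) k) (hσ' : HasDerivAt σ' σ'' k) (hw : 0 < w k) :
    HasDerivAt (fun x => CBSSlope F x (w x) (σ' x))
      (CBSSlope F k (w k) (σ' k) + F * gauss (dplus k (w k)) *
        (σ'' + √(w k) * dplusSlope k (w k) (σ' k) * dminusSlope k (w k) (σ' k))) k := by
  have hφ := (hasDerivAt_gauss _).comp k (hasDerivAt_dplus_slice hσ hw)
  refine (((hφ.fun_mul hσ').fun_sub
    (hasDerivAt_exp_mul_normCdf_dminus_slice hσ hw)).const_mul F).congr_deriv ?_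
  rw [mul_right_comm (√(w k)), sqrt_mul_dminusSlope k (σ' k) hw, CBSSlope, dminusSlope,
    Function.comp_apply]
  ring

theorem hasDerivAt_div_two_mul_sqrt {w' : ℝ → ℝ} {w'' : ℝ} (hw' : HasDerivAt w (w' k) k)
    (hw'' : HasDerivAt w' w'' k) (hw : 0 < w k) :
    HasDerivAt (fun x => w' x / (2 * √(w x)))
      ((w'' / 2 - (w' k / (2 * √(w k))) ^ 2) / √(w k)) k := by
  have hσ : √(w k) ≠ 0 := (Real.sqrt_pos.2 hw).ne'
  refine (hw''.fun_div ((hw'.sqrt hw.ne').const_mul 2) (by positivity)).congr_deriv ?_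
  field

end Slice

/-- Durrleman factorization of the slice `C(k) = C_BS(k, w(k))`:
`C″(k) − C′(k) = (F·φ(d₊(k,w(k)))/√(w(k)))·g(k)`. -/
theorem durrleman_slice_factorization (F : ℝ) (hF : 0 < F)
    (w : ℝ → ℝ) (hw1 : Differentiable ℝ w) (hw2 : Differentiable ℝ (deriv w))
    (hwpos : ∀ k, 0 < w k) :
    Differentiable ℝ (fun k : ℝ => CBS F k (w k)) ∧
    Differentiable ℝ (deriv (fun k : ℝ => CBS F k (w k))) ∧
    ∀ k : ℝ,
      deriv (deriv (fun k : ℝ => CBS F k (w k))) k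
        - deriv (fun k : ℝ => CBS F k (w k)) k
      = F * gauss (dplus k (w k)) / Real.sqrt (w k) *
          ((1 - k * deriv w k / (2 * w k)) ^ 2
            - (deriv w k) ^ 2 / 4 * (1 / w k + 1 / 4)
            + deriv (deriv w) k / 2) := by
  have hσ (k : ℝ) := (hw1 k).hasDerivAt.sqrt (hwpos k).ne'
  have hσ' (k : ℝ) := hasDerivAt_div_two_mul_sqrt (hw1 k).hasDerivAt (hw2 k).hasDerivAt (hwpos k)
  have hC (k : ℝ) := hasDerivAt_CBS_slice F (hσ k) (hwpos k)
  have hC' (k : ℝ) := hasDerivAt_CBSSlope_slice F (hσ k) (hσ' k) (hwpos k)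
  rw [funext fun k => (hC k).deriv]
  refine ⟨fun k => (hC k).differentiableAt, fun k => (hC' k).differentiableAt, fun k => ?_⟩
  have hσ0 : √(w k) ≠ 0 := (Real.sqrt_pos.2 (hwpos k)).ne'
  rw [(hC' k).deriv, add_sub_cancel_left, ← durrleman, durrleman_eq_sqrt_mul _ _ _ (hwpos k),
    ← mul_assoc (_ / _), div_mul_cancel₀ _ hσ0]
end

section
/- Fix λ > 0 and define φ(θ) := (1/(λ·θ))·(1 − (1 − exp(−λ·θ))/(λ·θ)) for θ > 0. Then the function θ ↦ θ·φ(θ) is differentiable on (0,∞) with derivative d/dθ(θ·φ(θ)) = exp(−λ·θ)·(exp(λ·θ) − 1 − λ·θ)/(λ²·θ²), this derivative is strictly positive for every θ > 0, and consequently θ ↦ θ·φ(θ) is strictly monotonically increasing on (0,∞). -/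
/-!
With `ψ x = 1 - (1 - e⁻ˣ) / x` one has `θ · φ(θ) = λ⁻¹ · ψ(λθ)`, so by the chain rule its
derivative at `θ` is `ψ'(λθ)`. Up to the positive factor `e⁻ˣ / x²`, the derivative `ψ' x` is
`eˣ - 1 - x`, which is positive for `x ≠ 0` by strict convexity of the exponential.
-/

open Real

/-- The Heston-like SSVI wing function in the variable `x = λθ`, through which alone it depends on
`λ` and `θ`: the function `φ(θ)` of parameter `λ` is `hestonPhi (λ * θ)`. Its value at `0` is the
junk value `0`, not the limit `1 / 2`. -/
noncomputable def hestonPhi (x : ℝ) : ℝ :=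
  1 / x * (1 - (1 - exp (-x)) / x)

/-- The derivative of `x * hestonPhi x` at `x ≠ 0`, in a form whose sign can be read off. -/
noncomputable def mulHestonPhiDeriv (x : ℝ) : ℝ :=
  exp (-x) * (exp x - 1 - x) / x ^ 2

theorem mul_hestonPhi_of_ne_zero {x : ℝ} (hx : x ≠ 0) :
    x * hestonPhi x = 1 - (1 - exp (-x)) / x := by
  rw [hestonPhi, ← mul_assoc, mul_one_div_cancel hx, one_mul]

theorem mulHestonPhiDeriv_pos {x : ℝ} (hx : x ≠ 0) : 0 < mulHestonPhiDeriv x := by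
  have exp_gap : 0 < exp x - 1 - x := by linarith [add_one_lt_exp hx]
  unfold mulHestonPhiDeriv
  positivity

theorem hasDerivAt_mul_hestonPhi {x : ℝ} (hx : x ≠ 0) :
    HasDerivAt (fun y => y * hestonPhi y) (mulHestonPhiDeriv x) x := by
  have exp_neg_mul_exp : exp (-x) * exp x = 1 := by rw [← exp_add, neg_add_cancel, exp_zero]
  have closed_form : HasDerivAt (fun y => 1 - (1 - exp (-y)) / y) (mulHestonPhiDeriv x) x := by
    refine ((((hasDerivAt_neg x).exp.const_sub 1).fun_div (hasDerivAt_id' x) hx).const_sub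
      1).congr_deriv ?_
    rw [mulHestonPhiDeriv, ← neg_div]
    congr 1
    linear_combination -exp_neg_mul_exp
  exact closed_form.congr_of_eventuallyEq <|
    (eventually_ne_nhds hx).mono fun _ hy => mul_hestonPhi_of_ne_zero hy

theorem hasDerivAt_mul_hestonPhi_const_mul {lam θ : ℝ} (hlam : lam ≠ 0) (hθ : θ ≠ 0) :
    HasDerivAt (fun t => t * hestonPhi (lam * t)) (mulHestonPhiDeriv (lam * θ)) θ := by
  have chain_rule : HasDerivAt (fun t => lam⁻¹ * (lam * t * hestonPhi (lam * t)))
      (lam⁻¹ * (mulHestonPhiDeriv (lam * θ) * lam)) θ :=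
    ((hasDerivAt_mul_hestonPhi (mul_ne_zero hlam hθ)).comp θ
      (hasDerivAt_const_mul lam)).const_mul lam⁻¹
  convert chain_rule using 1
  · funext t
    rw [mul_assoc, inv_mul_cancel_left₀ hlam]
  · rw [mul_comm _ lam, inv_mul_cancel_left₀ hlam]

theorem strictMonoOn_mul_hestonPhi_const_mul {lam : ℝ} (hlam : lam ≠ 0) {s : Set ℝ}
    (hs : Convex ℝ s) (h0 : (0 : ℝ) ∉ s) :
    StrictMonoOn (fun θ => θ * hestonPhi (lam * θ)) s := by
  have ne_zero {θ : ℝ} (hθ : θ ∈ s) : θ ≠ 0 := ne_of_mem_of_not_mem hθ h0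
  refine strictMonoOn_of_hasDerivWithinAt_pos (f' := fun θ => mulHestonPhiDeriv (lam * θ)) hs
    (fun θ hθ => ?_) (fun θ hθ => ?_) (fun θ hθ => ?_)
  · exact (hasDerivAt_mul_hestonPhi_const_mul hlam (ne_zero hθ)).continuousAt.continuousWithinAt
  · exact (hasDerivAt_mul_hestonPhi_const_mul hlam
      (ne_zero (interior_subset hθ))).hasDerivWithinAt
  · exact mulHestonPhiDeriv_pos (mul_ne_zero hlam (ne_zero (interior_subset hθ)))

theorem ssvi_theta_phi_strictMono_general (lam : ℝ) (hlam : lam ≠ 0) :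
    (∀ θ : ℝ, θ ≠ 0 →
      HasDerivAt
        (fun θ : ℝ => θ * (1 / (lam * θ) * (1 - (1 - Real.exp (-(lam * θ))) / (lam * θ))))
        (Real.exp (-(lam * θ)) * (Real.exp (lam * θ) - 1 - lam * θ) / (lam ^ 2 * θ ^ 2)) θ) ∧
    (∀ θ : ℝ, θ ≠ 0 →
      0 < Real.exp (-(lam * θ)) * (Real.exp (lam * θ) - 1 - lam * θ) / (lam ^ 2 * θ ^ 2)) ∧
    ∀ s : Set ℝ, Convex ℝ s → 0 ∉ s → StrictMonoOn
      (fun θ : ℝ => θ * (1 / (lam * θ) * (1 - (1 - Real.exp (-(lam * θ))) / (lam * θ)))) s := by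
  simp only [← mul_pow]
  exact ⟨fun _ hθ => hasDerivAt_mul_hestonPhi_const_mul hlam hθ,
    fun _ hθ => mulHestonPhiDeriv_pos (mul_ne_zero hlam hθ),
    fun _ hs h0 => strictMonoOn_mul_hestonPhi_const_mul hlam hs h0⟩

/-- The SSVI map `θ ↦ θ·φ(θ)` with `φ(θ) = (1/(λθ))(1 − (1 − e^{−λθ})/(λθ))` has derivative
`e^{−λθ}(e^{λθ} − 1 − λθ)/(λ²θ²) > 0` on `(0,∞)`, hence is strictly increasing there. -/
theorem ssvi_theta_phi_strictMono (lam : ℝ) (hlam : 0 < lam) :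
    (∀ θ : ℝ, 0 < θ →
      HasDerivAt
        (fun θ : ℝ => θ * (1 / (lam * θ) * (1 - (1 - Real.exp (-(lam * θ))) / (lam * θ))))
        (Real.exp (-(lam * θ)) * (Real.exp (lam * θ) - 1 - lam * θ) / (lam ^ 2 * θ ^ 2)) θ) ∧
    (∀ θ : ℝ, 0 < θ →
      0 < Real.exp (-(lam * θ)) * (Real.exp (lam * θ) - 1 - lam * θ) / (lam ^ 2 * θ ^ 2)) ∧
    StrictMonoOn
      (fun θ : ℝ => θ * (1 / (lam * θ) * (1 - (1 - Real.exp (-(lam * θ))) / (lam * θ))))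
      (Set.Ioi 0) := by
  obtain ⟨hderiv, hpos, hmono⟩ := ssvi_theta_phi_strictMono_general lam hlam.ne'
  exact ⟨fun θ hθ => hderiv θ hθ.ne', fun θ hθ => hpos θ hθ.ne',
    hmono _ (convex_Ioi 0) Set.self_notMem_Ioi⟩
end

section
/- Define h(x) := (1 − (1 + x)·exp(−x)) / (exp(−x) + x − 1) for x > 0. Then h is strictly decreasing on (0,∞) and h(x) tends to 1 as x tends to 0 from the right. -/
/-!
The numerator and the denominator of `h` vanish at `0`, and the quotient of their derivatives is
`x * exp (-x) / (1 - exp (-x)) = x / (exp x - 1)`. This tends to `1` at `0`, being the inverse of a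
difference quotient of `exp`, so `h` tends to `1` by L'Hôpital's rule. The monotonicity comes from
the monotone form of that rule: by Cauchy's mean value theorem, if `g' > 0` and `f' / g'` decreases,
then so does `(f x - f a) / (g x - g a)`. Applied to `id` and `exp`, this says that
`x / (exp x - 1)` decreases; applied again, to the numerator and the denominator of `h`, it says
that `h` decreases.
-/

open Set Filter Topology

section CauchyMeanValue

variable {f g f' g' : ℝ → ℝ}

lemma exists_hasDerivAt_div_eq_div_sub {a b : ℝ} (hab : a < b)
    (hfc : ContinuousOn f (Icc a b)) (hgc : ContinuousOn g (Icc a b))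
    (hff' : ∀ x ∈ Ioo a b, HasDerivAt f (f' x) x) (hgg' : ∀ x ∈ Ioo a b, HasDerivAt g (g' x) x)
    (hg' : ∀ x ∈ Ioo a b, g' x ≠ 0) :
    ∃ c ∈ Ioo a b, f' c / g' c = (f b - f a) / (g b - g a) := by
  have hgab : g b - g a ≠ 0 := fun h ↦
    let ⟨c, hc, hgc'⟩ := exists_hasDerivAt_eq_zero hab hgc (sub_eq_zero.1 h).symm hgg'
    hg' c hc hgc'
  obtain ⟨c, hc, hslope⟩ := exists_ratio_hasDerivAt_eq_ratio_slope f f' hab hfc hff' g g' hgc hgg'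
  refine ⟨c, hc, (div_eq_div_iff (hg' c hc) hgab).2 ?_⟩
  rw [← hslope, mul_comm]

variable {s : Set ℝ}

lemma div_sub_lt_div_sub_of_strictAntiOn_div (hs : Convex ℝ s)
    (hfc : ContinuousOn f s) (hgc : ContinuousOn g s)
    (hff' : ∀ x ∈ interior s, HasDerivAt f (f' x) x)
    (hgg' : ∀ x ∈ interior s, HasDerivAt g (g' x) x) (hg' : ∀ x ∈ interior s, g' x ≠ 0)
    (hanti : StrictAntiOn (fun x ↦ f' x / g' x) (interior s))
    {x y z : ℝ} (hx : x ∈ s) (hz : z ∈ s) (hxy : x < y) (hyz : y < z) :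
    (f z - f y) / (g z - g y) < (f y - f x) / (g y - g x) := by
  have exists_slope : ∀ {u v}, u ∈ s → v ∈ s → u < v →
      ∃ c ∈ Ioo u v, c ∈ interior s ∧ f' c / g' c = (f v - f u) / (g v - g u) := by
    intro u v hu hv huv
    have hIcc : Icc u v ⊆ s := hs.ordConnected.out hu hv
    have hIoo : Ioo u v ⊆ interior s := interior_Icc.symm.trans_subset (interior_mono hIcc)
    obtain ⟨c, hc, hslope⟩ := exists_hasDerivAt_div_eq_div_sub huv (hfc.mono hIcc) (hgc.mono hIcc)
      (fun w hw ↦ hff' w (hIoo hw)) (fun w hw ↦ hgg' w (hIoo hw)) (fun w hw ↦ hg' w (hIoo hw))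
    exact ⟨c, hc, hIoo hc, hslope⟩
  have hy : y ∈ s := hs.ordConnected.out hx hz ⟨hxy.le, hyz.le⟩
  obtain ⟨c, hc, hcs, hc_slope⟩ := exists_slope hx hy hxy
  obtain ⟨d, hd, hds, hd_slope⟩ := exists_slope hy hz hyz
  rw [← hc_slope, ← hd_slope]
  exact hanti hcs hds (hc.2.trans hd.1)

theorem strictAntiOn_div_sub_of_strictAntiOn_div (hs : Convex ℝ s)
    (hfc : ContinuousOn f s) (hgc : ContinuousOn g s)
    (hff' : ∀ x ∈ interior s, HasDerivAt f (f' x) x)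
    (hgg' : ∀ x ∈ interior s, HasDerivAt g (g' x) x) (hg' : ∀ x ∈ interior s, 0 < g' x)
    (hanti : StrictAntiOn (fun x ↦ f' x / g' x) (interior s)) {a : ℝ} (ha : a ∈ s) :
    StrictAntiOn (fun x ↦ (f x - f a) / (g x - g a)) (s \ {a}) := by
  have hg : StrictMonoOn g s := strictMonoOn_of_hasDerivWithinAt_pos hs hgc
    (fun x hx ↦ (hgg' x hx).hasDerivWithinAt) hg'
  have chord_lt_chord {x y z : ℝ} (hx : x ∈ s) (hz : z ∈ s) (hxy : x < y) (hyz : y < z) :=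
    div_sub_lt_div_sub_of_strictAntiOn_div hs hfc hgc hff' hgg' (fun w hw ↦ (hg' w hw).ne') hanti
      hx hz hxy hyz
  rintro x ⟨hx, hxa⟩ y ⟨hy, hya⟩ hxy
  have hgxy : g x < g y := hg hx hy hxy
  -- When `a` lies outside `[x, y]`, the slope of the longer secant is the mediant of the slopes of
  -- the two chords it spans; when `a` lies between, the secants are themselves the chords.
  rcases lt_or_gt_of_ne hxa with hxa | hax
  · rcases lt_or_gt_of_ne hya with hya | hay
    · have hright := chord_lt_chord hx ha hxy hya
      have hgya : g y < g a := hg hy ha hya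
      simp only [← neg_div_neg_eq (f _ - f a), neg_sub]
      rw [div_lt_div_iff₀ (by linarith) (by linarith)] at hright ⊢
      linarith
    · simpa only [← neg_div_neg_eq (f x - f a), neg_sub] using chord_lt_chord hx hy hxa hay
  · have hleft := chord_lt_chord ha hy hax hxy
    have hgax : g a < g x := hg ha hx hax
    rw [div_lt_div_iff₀ (by linarith) (by linarith)] at hleft ⊢
    linarith

end CauchyMeanValue

lemma strictAntiOn_div_exp_sub_one :
    StrictAntiOn (fun x : ℝ ↦ x / (Real.exp x - 1)) {0}ᶜ := by
  have hanti : StrictAntiOn (fun x ↦ 1 / Real.exp x) (interior univ) := fun x _ y _ hxy ↦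
    one_div_lt_one_div_of_lt (Real.exp_pos x) (Real.exp_lt_exp.2 hxy)
  simpa [compl_eq_univ_sdiff] using strictAntiOn_div_sub_of_strictAntiOn_div convex_univ
    continuousOn_id Real.continuous_exp.continuousOn (fun x _ ↦ hasDerivAt_id x)
    (fun x _ ↦ Real.hasDerivAt_exp x) (fun x _ ↦ Real.exp_pos x) hanti (mem_univ 0)

lemma tendsto_div_exp_sub_one :
    Tendsto (fun x : ℝ ↦ x / (Real.exp x - 1)) (𝓝[≠] 0) (𝓝 1) := by
  have hslope := (Real.hasDerivAt_exp 0).tendsto_slope_zero.inv₀ (Real.exp_ne_zero 0)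
  simpa [← div_eq_mul_inv, div_eq_inv_mul] using hslope

lemma mul_exp_neg_div_one_sub_exp_neg (x : ℝ) :
    x * Real.exp (-x) / (1 - Real.exp (-x)) = x / (Real.exp x - 1) := by
  have hden : 1 - Real.exp (-x) = (Real.exp x - 1) * Real.exp (-x) := by
    rw [sub_mul, ← Real.exp_add, add_neg_cancel, Real.exp_zero, one_mul]
  rw [hden, mul_div_mul_right _ _ (Real.exp_ne_zero _)]

lemma hasDerivAt_one_sub_one_add_mul_exp_neg (x : ℝ) :
    HasDerivAt (fun x ↦ 1 - (1 + x) * Real.exp (-x)) (x * Real.exp (-x)) x := by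
  refine ((((hasDerivAt_id' x).const_add 1).mul
    (hasDerivAt_neg' x).exp).const_sub 1).congr_deriv ?_
  ring

lemma hasDerivAt_exp_neg_add_sub_one (x : ℝ) :
    HasDerivAt (fun x ↦ Real.exp (-x) + x - 1) (1 - Real.exp (-x)) x := by
  refine (((hasDerivAt_neg' x).exp.add (hasDerivAt_id' x)).sub_const 1).congr_deriv ?_
  ring

/-- `h(x) = (1 − (1+x)e^{−x})/(e^{−x} + x − 1)` is strictly decreasing on `(0,∞)` and
tends to `1` as `x → 0⁺`. -/
theorem ssvi_h_strictAnti_and_limit :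
    StrictAntiOn
      (fun x : ℝ => (1 - (1 + x) * Real.exp (-x)) / (Real.exp (-x) + x - 1)) (Set.Ioi 0) ∧
    Filter.Tendsto
      (fun x : ℝ => (1 - (1 + x) * Real.exp (-x)) / (Real.exp (-x) + x - 1))
      (nhdsWithin 0 (Set.Ioi 0)) (nhds 1) := by
  have hN := hasDerivAt_one_sub_one_add_mul_exp_neg
  have hD := hasDerivAt_exp_neg_add_sub_one
  have hD' : ∀ x ∈ Ioi (0 : ℝ), 0 < 1 - Real.exp (-x) := fun x hx ↦
    sub_pos.2 (Real.exp_lt_one_iff.2 (neg_lt_zero.2 hx))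
  constructor
  · have hanti : StrictAntiOn (fun x ↦ x * Real.exp (-x) / (1 - Real.exp (-x)))
        (interior (Ici 0)) := by
      simp only [mul_exp_neg_div_one_sub_exp_neg, interior_Ici]
      exact strictAntiOn_div_exp_sub_one.mono fun x hx ↦ ne_of_gt hx
    simpa using strictAntiOn_div_sub_of_strictAntiOn_div (convex_Ici 0)
      (fun x _ ↦ (hN x).continuousAt.continuousWithinAt)
      (fun x _ ↦ (hD x).continuousAt.continuousWithinAt) (fun x _ ↦ hN x) (fun x _ ↦ hD x)
      (by rwa [interior_Ici]) hanti self_mem_Ici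
  · refine HasDerivAt.lhopital_zero_nhdsGT (.of_forall hN) (.of_forall hD)
      (eventually_mem_nhdsWithin.mono fun x hx ↦ (hD' x hx).ne') ?_ ?_ ?_
    · simpa using (hN 0).continuousAt.continuousWithinAt.tendsto
    · simpa using (hD 0).continuousAt.continuousWithinAt.tendsto
    · simp only [mul_exp_neg_div_one_sub_exp_neg]
      exact tendsto_div_exp_sub_one.mono_left (nhdsGT_le_nhdsNE 0)
end
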